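/- Let A, B be integers and let p be an odd prime with p ∤ B(A² − 4B), and suppose the Legendre symbol (B/p) = 1 with b an integer satisfying b² ≡ B (mod p). If ((A²−4B)/p) = 1, then p divides u_{(p−1)/2}(A,B) and u_{(p+1)/2}(A,B) ≡ ((A−2b)/p) (mod p); if ((A²−4B)/p) = −1, then b·u_{(p−1)/2}(A,B) ≡ ((A−2b)/p) (mod p) and p divides u_{(p+1)/2}(A,B). Here ((A−2b)/p) denotes the Legendre symbol. -/

import Mathlib

/-- The Lucas sequence `u_n(A,B)`. -/
def lucasU (A B : ℤ) : ℕ → ℤ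
  | 0 => 0
  | 1 => 1
  | n + 2 => A * lucasU A B (n + 1) - B * lucasU A B n

theorem lucasU_binet {K : Type*} [Field K] (A B : ℤ) (x y : K) (h1 : x + y = A) (h2 : x * y = B) :
    ∀ n : ℕ, (x - y) * (lucasU A B n : K) = x ^ n - y ^ n ∧
      (x - y) * (lucasU A B (n + 1) : K) = x ^ (n + 1) - y ^ (n + 1) := by
  intro n
  induction n with
  | zero => simp [lucasU]
  | succ n ih =>
    refine ⟨ih.2, ?_⟩
    obtain ⟨i1, i2⟩ := ih
    rw [lucasU]
    push_cast
    rw [← h1, ← h2]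
    linear_combination (x + y) * i2 - x * y * i1

theorem lucas_aux (p h : ℕ) [Fact p.Prime] (hp : p = 2 * h + 1) (A B b : ℤ)
    {K : Type*} [Field K] [CharP K p] (x y : K) (e : ℤ)
    (hb : (b : K) ^ 2 = B) (hA : x + y = A) (hB : x * y = B) (hxy : x - y ≠ 0)
    (hb0 : (b : K) ≠ 0) (hc0 : (A : K) - 2 * b ≠ 0)
    (he : ((A : K) - 2 * b) ^ h = e) (he2 : (e : K) ^ 2 = 1) (hbp : (b : K) ^ p = b) :
    ((x ^ p = x ∧ y ^ p = y) → (lucasU A B h : K) = 0 ∧ (lucasU A B (h + 1) : K) = e) ∧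
    ((x ^ p = y ∧ y ^ p = x) → (b * lucasU A B h : K) = e ∧ (lucasU A B (h + 1) : K) = 0) := by
  obtain ⟨u1, u2⟩ := lucasU_binet A B x y hA hB h
  have key : ∀ z w : K, z + w = A → z * w = B →
      z - b ≠ 0 ∧ z ^ h * e * (z - b) = z ^ p - b := by
    intro z w h1 h2
    have hs : (z - b) ^ 2 = z * ((A : K) - 2 * b) := by
      rw [← h1]; linear_combination hb - h2
    have hz : z ≠ 0 := by
      rintro rfl
      apply pow_ne_zero 2 hb0
      rw [hb, ← h2]; ring
    refine ⟨fun h0 => ?_, ?_⟩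
    · rw [h0] at hs
      exact mul_ne_zero hz hc0 (by rw [← hs]; ring)
    · have : (z - b) ^ p = z ^ p - b := by rw [sub_pow_char, hbp]
      rw [← this, hp, pow_succ, pow_mul, hs, mul_pow, he]
  obtain ⟨nx, kx⟩ := key x y hA hB
  obtain ⟨ny, ky⟩ := key y x (by rw [add_comm, hA]) (by rw [mul_comm, hB])
  constructor
  · rintro ⟨hx, hy⟩
    rw [hx] at kx
    rw [hy] at ky
    have ex : x ^ h = e := by
      have : x ^ h * e = 1 := mul_right_cancel₀ nx (by rw [kx, one_mul])
      linear_combination e * this - x ^ h * he2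
    have ey : y ^ h = e := by
      have : y ^ h * e = 1 := mul_right_cancel₀ ny (by rw [ky, one_mul])
      linear_combination e * this - y ^ h * he2
    constructor
    · apply mul_left_cancel₀ hxy
      rw [u1, ex, ey]; ring
    · apply mul_left_cancel₀ hxy
      rw [u2, pow_succ, pow_succ, ex, ey]; ring
  · rintro ⟨hx, hy⟩
    rw [hx] at kx
    rw [hy] at ky
    have kx' : x ^ h * (x - b) = e * (y - b) := by
      linear_combination e * kx - x ^ h * (x - b) * he2
    have ky' : y ^ h * (y - b) = e * (x - b) := by
      linear_combination e * ky - y ^ h * (y - b) * he2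
    have hbb : (b : K) ^ 2 = x * y := by rw [hb, hB]
    have ex : x ^ (h + 1) = - b * e := by
      apply mul_right_cancel₀ nx
      rw [pow_succ]
      linear_combination x * kx' - e * hbb
    have ey : y ^ (h + 1) = - b * e := by
      apply mul_right_cancel₀ ny
      rw [pow_succ]
      linear_combination y * ky' - e * hbb
    constructor
    · apply mul_left_cancel₀ hxy
      apply mul_left_cancel₀ hb0
      -- b² = x y
      have : (x - y) * (b * (lucasU A B h : K)) = b * (x ^ h - y ^ h) := by rw [← u1]; ring
      rw [this]
      rw [pow_succ] at ex ey
      linear_combination (x ^ h - y ^ h) * hbb + y * ex - x * ey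
    · apply mul_left_cancel₀ hxy
      rw [u2, ex, ey]; ring

theorem stmt15 (p : ℕ) [Fact p.Prime] (hodd : Odd p) (A B b : ℤ)
    (hpB : ¬ ((p : ℤ) ∣ B * (A ^ 2 - 4 * B)))
    (hB : legendreSym p B = 1) (hb : b ^ 2 ≡ B [ZMOD p]) :
    (legendreSym p (A ^ 2 - 4 * B) = 1 →
      ((p : ℤ) ∣ lucasU A B ((p - 1) / 2) ∧
        lucasU A B ((p + 1) / 2) ≡ legendreSym p (A - 2 * b) [ZMOD p])) ∧
    (legendreSym p (A ^ 2 - 4 * B) = -1 →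
      (b * lucasU A B ((p - 1) / 2) ≡ legendreSym p (A - 2 * b) [ZMOD p] ∧
        (p : ℤ) ∣ lucasU A B ((p + 1) / 2))) := by
  obtain ⟨h, hp⟩ := hodd
  have e1 : (p - 1) / 2 = h := by omega
  have e2 : (p + 1) / 2 = h + 1 := by omega
  have e3 : p / 2 = h := by omega
  rw [e1, e2]
  obtain ⟨K, iF, iA, iC⟩ : ∃ (K : Type) (_ : Field K) (_ : Algebra (ZMod p) K), IsAlgClosed K :=
    ⟨AlgebraicClosure (ZMod p), inferInstance, inferInstance, inferInstance⟩
  have : CharP K p := charP_of_injective_algebraMap (algebraMap (ZMod p) K).injective p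
  have hdvd : ∀ a : ℤ, (p : ℤ) ∣ a ↔ (a : K) = 0 := fun a => (CharP.intCast_eq_zero_iff K p a).symm
  have hmod : ∀ a c : ℤ, a ≡ c [ZMOD p] ↔ (a : K) = c := fun a c =>
    (CharP.intCast_eq_intCast K p).symm
  have hfer : ∀ a : ℤ, (a : K) ^ p = a := by
    intro a
    have := congrArg (algebraMap (ZMod p) K) (ZMod.pow_card (a : ZMod p))
    rwa [map_pow, map_intCast] at this
  have hleg : ∀ a : ℤ, (a : K) ^ h = (legendreSym p a : ℤ) := by
    intro a
    have := congrArg (algebraMap (ZMod p) K) (legendreSym.eq_pow p a)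
    rw [e3] at this
    simpa using this.symm
  have h2 : (2 : K) ≠ 0 := by
    intro h0
    have : (p : ℤ) ∣ 2 := (hdvd 2).2 (by exact_mod_cast h0)
    have h3 := Int.le_of_dvd (by norm_num) this
    have := (Fact.out : p.Prime).two_le
    omega
  rw [hdvd] at hpB
  push_cast at hpB
  rw [hmod] at hb
  push_cast at hb
  have hB0 : (B : K) ≠ 0 := left_ne_zero_of_mul hpB
  have hD0 : (A : K) ^ 2 - 4 * B ≠ 0 := right_ne_zero_of_mul hpB
  have hb0 : (b : K) ≠ 0 := by
    intro h0; apply hB0; rw [← hb, h0]; ring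
  have hc0 : (A : K) - 2 * b ≠ 0 := by
    intro h0; apply hD0; rw [← hb]; linear_combination (A + 2 * b : K) * h0
  obtain ⟨d, hd⟩ := IsAlgClosed.exists_pow_nat_eq ((A : K) ^ 2 - 4 * B) (n := 2) (by norm_num)
  have hd0 : d ≠ 0 := by
    rintro rfl; apply hD0; rw [← hd]; ring
  have hdp : d ^ p = (legendreSym p (A ^ 2 - 4 * B) : ℤ) * d := by
    rw [← hleg, hp, pow_succ, pow_mul, hd]; push_cast; rfl
  have hx2 : (2 : K) ^ p = 2 := by exact_mod_cast hfer 2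
  have hxp : ((A + d) / 2) ^ p = ((A : K) + d ^ p) / 2 := by
    rw [div_pow, add_pow_char, hfer, hx2]
  have hyp : ((A - d) / 2) ^ p = ((A : K) - d ^ p) / 2 := by
    rw [div_pow, sub_pow_char, hfer, hx2]
  have hc : ((A - 2 * b : ℤ) : K) = (A : K) - 2 * b := by push_cast; rfl
  have he := hleg (A - 2 * b)
  have he2 : ((legendreSym p (A - 2 * b) : ℤ) : K) ^ 2 = 1 := by
    have : ((A - 2 * b : ℤ) : ZMod p) ≠ 0 := by
      intro h0
      apply hc0
      rw [← hc, ← hdvd]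
      exact (ZMod.intCast_zmod_eq_zero_iff_dvd _ p).1 h0
    exact_mod_cast congrArg (Int.cast : ℤ → K) (legendreSym.sq_one p this)
  rw [hc] at he
  obtain ⟨r1, r2⟩ := lucas_aux p h hp A B b ((A + d) / 2) ((A - d) / 2) _ hb
    (by field_simp; ring) (by
      field_simp
      linear_combination -hd)
    (by
      have : ((A : K) + d) / 2 - (A - d) / 2 = d := by field_simp; ring
      rw [this]; exact hd0) hb0 hc0 he he2 (hfer b)
  rw [hdvd, hdvd, hmod, hmod]
  constructor
  · intro hl
    rw [hl] at hdp
    have hdp' : d ^ p = d := by rw [hdp]; simp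
    exact r1 ⟨by rw [hxp, hdp'], by rw [hyp, hdp']⟩
  · intro hl
    rw [hl] at hdp
    have hdp' : d ^ p = -d := by rw [hdp]; simp
    have := r2 ⟨by rw [hxp, hdp']; ring, by rw [hyp, hdp']; ring⟩
    push_cast
    exact this
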